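/- Let G be a finite solvable group and χ ∈ Irr(G) with χ(1) > 1. Let α_1, …, α_n be the distinct non-principal irreducible constituents of χ·conj(χ). If Ker(α_j) is maximal under inclusion among the subgroups Ker(α_1), …, Ker(α_n), then the multiplicity [χ·conj(χ), α_j] = 1. In particular, some non-principal irreducible constituent of χ·conj(χ) occurs with multiplicity exactly 1. -/

import Mathlib

open scoped Classical BigOperators

/-- Inner product of class functions on a finite group. -/
noncomputable def charInner (G : Type) [Group G] [Fintype G] (φ ψ : G → ℂ) : ℂ :=
  (Fintype.card G : ℂ)⁻¹ * ∑ g : G, φ g * (starRingEnd ℂ) (ψ g)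

/-- `χ` is the character of an irreducible complex representation of `G`. -/
def IsIrrChar (G : Type) [Group G] [Fintype G] (χ : G → ℂ) : Prop :=
  ∃ V : FDRep ℂ G, CategoryTheory.Simple V ∧ V.character = χ

/-- The number of distinct non-principal irreducible constituents of `χ ⬝ conj χ`. -/
noncomputable def etaChar (G : Type) [Group G] [Fintype G] (χ : G → ℂ) : ℕ :=
  Set.ncard {α : G → ℂ | IsIrrChar G α ∧ α ≠ (fun _ => 1) ∧
    charInner G (fun g => χ g * (starRingEnd ℂ) (χ g)) α ≠ 0}

/-- Kernel of a character, as a set. -/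
def charKer (G : Type) [Group G] (χ : G → ℂ) : Set G := {g | χ g = χ 1}

/-- Induced character from a subgroup. -/
noncomputable def indChar (K : Type) [Group K] [Fintype K] (H : Subgroup K) (φ : H → ℂ) :
    K → ℂ := fun k =>
  (Nat.card H : ℂ)⁻¹ * ∑ x : K, if h : x⁻¹ * k * x ∈ H then φ ⟨x⁻¹ * k * x, h⟩ else 0


/-- Derived length of a group. -/
noncomputable def derivedLength (G : Type) [Group G] : ℕ :=
  sInf {n | derivedSeries G n = ⊥}

/-- A finite group is supersolvable if it has a chain of normal subgroups of `G`
from `⊥` to `⊤` with cyclic factors. -/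
def IsSupersolvableGroup (G : Type) [Group G] : Prop :=
  ∃ (n : ℕ) (H : Fin (n + 1) → Subgroup G),
    (∀ i, (H i).Normal) ∧ Monotone H ∧ H 0 = ⊥ ∧ H (Fin.last n) = ⊤ ∧
    ∀ i : Fin n, ∃ g ∈ H i.succ, H i.succ ≤ H i.castSucc ⊔ Subgroup.zpowers g

/-!
Let `V` afford `χ` and `W` afford `α j`, so that `χ · conj χ` is the character of `End V` and the
multiplicity of `α j` is `dim Hom_G(W, End V)`. Since `G` is solvable and `ker W ≠ G`, there is a
normal subgroup `L` properly containing `ker W` with `[L, L] ≤ ker W`. By maximality of the kernel,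
no non-principal constituent of `End V` has `L` in its kernel; hence `(End V)^L = (End V)^G` is
one-dimensional and `V` restricts irreducibly to `L`.

As `L` acts on `W` through commuting operators, it has a common eigenvector `w`, of weight `c` say.
Evaluation at `w` embeds `Hom_G(W, End V)` into the `c`-weight space of `L` on `End V`. A nonzero
element of that space maps `V` onto an `L`-stable subspace, hence is bijective, and a space of
endomorphisms whose nonzero elements are all bijective has dimension at most one.
-/

open Module Representation ComplexConjugate

section LinearAlgebra

lemma trace_eq_sum_of_apply_basis_eq_smul {ι R M : Type*} [Fintype ι] [CommRing R]
    [AddCommGroup M] [Module R M] (b : Basis ι R M) {f : End R M} {μ : ι → R}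
    (hf : ∀ i, f (b i) = μ i • b i) : LinearMap.trace R M f = ∑ i, μ i := by
  rw [LinearMap.trace_eq_matrix_trace R b, Matrix.trace]
  refine Finset.sum_congr rfl fun i _ => ?_
  rw [Matrix.diag_apply, LinearMap.toMatrix_apply, hf, map_smul, b.repr_self]
  simp

lemma isSemisimple_of_pow_eq_one {k V : Type*} [Field k] [AddCommGroup V] [Module k V]
    {f : End k V} {m : ℕ} [NeZero (m : k)] (hf : f ^ m = 1) : f.IsSemisimple := by
  have hsep : (Polynomial.X ^ m - Polynomial.C (1 : k)).Separable :=
    Polynomial.separable_X_pow_sub_C 1 (NeZero.ne _) one_ne_zero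
  exact End.isSemisimple_of_squarefree_aeval_eq_zero hsep.squarefree (by simp [hf])

variable {k V : Type*} [Field k] [IsAlgClosed k] [AddCommGroup V] [Module k V]
  [FiniteDimensional k V]

lemma exists_basis_apply_eq_smul_of_isSemisimple {f : End k V} (hf : f.IsSemisimple) :
    ∃ (b : Basis (Fin (finrank k V)) k V) (μ : Fin (finrank k V) → k),
      ∀ i, f (b i) = μ i • b i := by
  have hint : DirectSum.IsInternal f.eigenspace :=
    DirectSum.isInternal_submodule_of_iSupIndep_of_iSup_eq_top f.eigenspaces_iSupIndep
      hf.iSup_eigenspace_eq_top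
  let b := hint.collectedBasis fun μ => finBasis k (f.eigenspace μ)
  let e := b.indexEquiv (finBasis k V)
  refine ⟨b.reindex e, fun i => (e.symm i).1, fun i => ?_⟩
  rw [b.reindex_apply]
  exact End.mem_eigenspace_iff.1 (hint.collectedBasis_mem _ _)

lemma exists_basis_apply_eq_smul_of_pow_eq_one {f : End k V} {m : ℕ} [NeZero (m : k)]
    (hf : f ^ m = 1) :
    ∃ (b : Basis (Fin (finrank k V)) k V) (μ : Fin (finrank k V) → k),
      ∀ i, f (b i) = μ i • b i ∧ μ i ^ m = 1 := by
  obtain ⟨b, μ, hb⟩ := exists_basis_apply_eq_smul_of_isSemisimple (isSemisimple_of_pow_eq_one hf)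
  refine ⟨b, μ, fun i => ⟨hb i, smul_left_injective k (b.ne_zero i) ?_⟩⟩
  have hvec : f.HasEigenvector (μ i) (b i) := ⟨End.mem_eigenspace_iff.2 (hb i), b.ne_zero i⟩
  simpa [hf] using (hvec.pow_apply m).symm

lemma finrank_le_one_of_forall_ne_zero_injective {S : Submodule k (End k V)}
    (hS : ∀ f ∈ S, f ≠ 0 → Function.Injective f) : finrank k S ≤ 1 := by
  rcases subsingleton_or_nontrivial S with _ | _
  · exact finrank_zero_of_subsingleton.trans_le zero_le_one
  obtain ⟨f, hf0⟩ := exists_ne (0 : S)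
  have hf0' : (f : End k V) ≠ 0 := by simpa using hf0
  let e := LinearEquiv.ofInjectiveEndo f.1 (hS f f.2 hf0')
  have : Nontrivial V := by
    by_contra h
    have := not_nontrivial_iff_subsingleton.1 h
    exact hf0' (Subsingleton.elim _ _)
  refine finrank_le_one f fun g => ?_
  -- An eigenvalue `c` of `f⁻¹ g` makes `g - c f` non-injective, hence zero.
  obtain ⟨c, hc⟩ := End.exists_eigenvalue (e.symm.toLinearMap ∘ₗ g.1)
  obtain ⟨v, hv, hv0⟩ := hc.exists_hasEigenvector
  have hgv : (g - c • f : S).1 v = 0 := by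
    have : g.1 v = c • f.1 v := by
      simpa [e, LinearEquiv.symm_apply_eq] using End.mem_eigenspace_iff.1 hv
    simpa [sub_eq_zero] using this
  have hsub : (g - c • f : S) = 0 := by
    by_contra h
    have hinj := hS _ (g - c • f).2 (by simpa [← Subtype.coe_inj] using h)
    exact hv0 (hinj (hgv.trans (map_zero _).symm))
  exact ⟨c, (sub_eq_zero.1 hsub).symm⟩

end LinearAlgebra

section ComplexTrace

variable {V : Type*} [AddCommGroup V] [Module ℂ V] [FiniteDimensional ℂ V]
  {f g : End ℂ V} {m : ℕ} [NeZero m]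

lemma conj_trace_eq_trace_of_pow_eq_one (hf : f ^ m = 1) (hgf : g * f = 1) :
    conj (LinearMap.trace ℂ V f) = LinearMap.trace ℂ V g := by
  have : NeZero (m : ℂ) := NeZero.charZero
  obtain ⟨b, μ, hb⟩ := exists_basis_apply_eq_smul_of_pow_eq_one hf
  have hconj (i) : conj (μ i) = (μ i)⁻¹ :=
    (Complex.inv_eq_conj (Complex.norm_eq_one_of_pow_eq_one (hb i).2 (NeZero.ne m))).symm
  have hg (i) : g (b i) = (μ i)⁻¹ • b i := by
    have hμ : μ i ≠ 0 := by
      rintro h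
      simpa [h, NeZero.ne m] using (hb i).2
    rw [eq_inv_smul_iff₀ hμ, ← map_smul, ← (hb i).1, ← End.mul_apply, hgf, End.one_apply]
  rw [trace_eq_sum_of_apply_basis_eq_smul b fun i => (hb i).1,
    trace_eq_sum_of_apply_basis_eq_smul b hg, map_sum]
  exact Finset.sum_congr rfl fun i _ => hconj i

lemma eq_one_of_pow_eq_one_of_trace_eq_finrank (hf : f ^ m = 1)
    (htr : LinearMap.trace ℂ V f = finrank ℂ V) : f = 1 := by
  have : NeZero (m : ℂ) := NeZero.charZero
  obtain ⟨b, μ, hb⟩ := exists_basis_apply_eq_smul_of_pow_eq_one hf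
  have hnorm (i) : ‖μ i‖ = 1 := Complex.norm_eq_one_of_pow_eq_one (hb i).2 (NeZero.ne m)
  have hre (i) : (μ i).re ≤ 1 := (Complex.re_le_norm _).trans (hnorm i).le
  have hsum : ∑ i, (μ i).re = ∑ _i : Fin (finrank ℂ V), (1 : ℝ) := by
    rw [trace_eq_sum_of_apply_basis_eq_smul b fun i => (hb i).1] at htr
    simpa using congrArg Complex.re htr
  have hre_eq (i) : (μ i).re = 1 :=
    (Finset.sum_eq_sum_iff_of_le fun i _ => hre i).1 hsum i (Finset.mem_univ i)
  refine b.ext fun i => ?_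
  have hμ : μ i = 1 := by
    have him : (μ i).im = 0 := Complex.abs_re_eq_norm.1 (by rw [hre_eq, hnorm, abs_one])
    exact Complex.ext (hre_eq i) him
  rw [(hb i).1, hμ, one_smul, End.one_apply]

end ComplexTrace

section Atoms

variable {k G V : Type*} [Field k] [Monoid G] [AddCommGroup V] [Module k V]
  {σ : Representation k G V}

lemma isIrreducible_toRepresentation_of_isAtom {U : Subrepresentation σ} (hU : IsAtom U) :
    IsIrreducible U.toRepresentation := by
  let incl (Y : Subrepresentation U.toRepresentation) : Subrepresentation σ :=
    ⟨Y.toSubmodule.map U.toSubmodule.subtype, by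
      rintro g _ ⟨y, hy, rfl⟩
      exact ⟨U.toRepresentation g y, Y.apply_mem_toSubmodule g hy, rfl⟩⟩
  have hincl : Function.Injective incl := fun Y Z h =>
    Subrepresentation.toSubmodule_injective <|
      Submodule.map_injective_of_injective U.toSubmodule.injective_subtype
        (congrArg Subrepresentation.toSubmodule h)
  have hbot : incl ⊥ = ⊥ := Subrepresentation.toSubmodule_injective (Submodule.map_bot _)
  have htop : incl ⊤ = U := Subrepresentation.toSubmodule_injective (Submodule.map_subtype_top _)
  refine { exists_pair_ne := ⟨⊥, ⊤, fun h => ?_⟩, eq_bot_or_eq_top := fun Y => ?_ }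
  · exact hU.1 (htop ▸ hbot ▸ congrArg incl h.symm)
  · have hY : incl Y ≤ U := Submodule.map_subtype_le U.toSubmodule Y.toSubmodule
    exact (hU.le_iff.1 hY).imp (fun h => hincl (h.trans hbot.symm))
      fun h => hincl (h.trans htop.symm)

lemma isAtomic_subrepresentation [FiniteDimensional k V] : IsAtomic (Subrepresentation σ) :=
  have : WellFoundedLT (Subrepresentation σ) :=
    StrictMono.wellFoundedLT (f := Subrepresentation.toSubmodule) fun _ _ h => h
  isAtomic_of_orderBot_wellFounded_lt wellFounded_lt

lemma exists_isAtom_le_of_not_le [IsSemisimpleRepresentation σ] {X Y : Subrepresentation σ}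
    (hXY : ¬ X ≤ Y) : ∃ U, IsAtom U ∧ U ≤ X ∧ ¬ U ≤ Y := by
  have : IsSemisimpleModule (MonoidAlgebra k G) σ.asModule :=
    (isSemisimpleRepresentation_iff_isSemisimpleModule_asModule σ).1 ‹_›
  let e : Subrepresentation σ ≃o Submodule (MonoidAlgebra k G) σ.asModule :=
    Subrepresentation.subrepresentationSubmoduleOrderIso
  have he : ¬ e X ≤ e Y := by rwa [e.le_iff_le]
  obtain ⟨U, hU, hUX, hUY⟩ : ∃ U, IsAtom U ∧ U ≤ e X ∧ ¬ U ≤ e Y := by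
    by_contra! h
    exact he (le_iff_atom_le_imp.2 h)
  exact ⟨e.symm U, (e.symm.isAtom_iff U).2 hU, e.symm_apply_le.2 hUX,
    fun h => hUY (e.symm_apply_le.1 h)⟩

end Atoms

section Schur

universe u

lemma isSimpleModule_of_finrank_end_eq_one {k R M : Type*} [Field k] [Ring R] [Algebra k R]
    [AddCommGroup M] [Module k M] [Module R M] [IsScalarTower k R M] [IsSemisimpleModule R M]
    (h : finrank k (End R M) = 1) : IsSimpleModule R M := by
  have : Nontrivial (End R M) := nontrivial_of_finrank_eq_succ h
  have : Nontrivial M := by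
    by_contra hM
    have := not_nontrivial_iff_subsingleton.1 hM
    exact one_ne_zero (Subsingleton.elim (1 : End R M) 0)
  rw [isSimpleModule_iff]
  refine { eq_bot_or_eq_top := fun X => ?_ }
  obtain ⟨Y, hXY⟩ := exists_isCompl X
  obtain ⟨c, hc⟩ := (finrank_eq_one_iff_of_nonzero' (1 : End R M) one_ne_zero).1 h
    (X.projection Y hXY)
  rcases eq_or_ne c 0 with rfl | hc0
  · left
    rw [← Submodule.range_projection hXY, ← hc, zero_smul, LinearMap.range_zero]
  · right
    have hY : Y = ⊥ := by
      rw [← Submodule.ker_projection hXY, ← hc, LinearMap.ker_eq_bot]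
      exact smul_right_injective M hc0
    rw [← hXY.sup_eq_top, hY, sup_bot_eq]

variable {k G V : Type*} [Field k] [IsAlgClosed k] [AddCommGroup V] [Module k V]
  [FiniteDimensional k V]

lemma isIrreducible_iff_finrank_intertwiningMap_self_eq_one [Monoid G]
    (ρ : Representation k G V) [IsSemisimpleRepresentation ρ] :
    IsIrreducible ρ ↔ finrank k (IntertwiningMap ρ ρ) = 1 := by
  refine ⟨fun _ => IsIrreducible.finrank_intertwiningMap_self ρ, fun h => ?_⟩
  have := (isSemisimpleRepresentation_iff_isSemisimpleModule_asModule ρ).1 ‹_›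
  rw [irreducible_iff_isSimpleModule_asModule]
  refine isSimpleModule_of_finrank_end_eq_one (k := k) ?_
  rwa [← (IntertwiningMap.equivLinearMapAsModule ρ ρ).finrank_eq]

lemma isIrreducible_iff_finrank_invariants_linHom_eq_one [Group G] [Finite G]
    [NeZero (Nat.card G : k)] (ρ : Representation k G V) :
    IsIrreducible ρ ↔ finrank k (linHom ρ ρ).invariants = 1 := by
  rw [isIrreducible_iff_finrank_intertwiningMap_self_eq_one,
    (invariantsEquivIntertwiningMap ρ ρ).finrank_eq]

lemma simple_iff_isIrreducible {k G : Type u} [Field k] [IsAlgClosed k] [Group G] [Finite G]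
    [NeZero (Nat.card G : k)] (V : FDRep k G) :
    CategoryTheory.Simple V ↔ IsIrreducible V.ρ := by
  rw [FDRep.simple_iff_end_is_rank_one, isIrreducible_iff_finrank_invariants_linHom_eq_one,
    (linHom.invariantsEquivFDRepHom V V).finrank_eq]

lemma finrank_eq_one_of_isIrreducible_of_isTrivial {k G V : Type*} [Field k] [Monoid G]
    [AddCommGroup V] [Module k V] (ρ : Representation k G V) [IsIrreducible ρ] [ρ.IsTrivial] :
    finrank k V = 1 := by
  have e : Subrepresentation ρ ≃o Submodule k V :=
    { toFun := Subrepresentation.toSubmodule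
      invFun := fun X => ⟨X, fun g v hv => by rwa [isTrivial_def ρ g]⟩
      left_inv := fun _ => rfl
      right_inv := fun _ => rfl
      map_rel_iff' := Iff.rfl }
  have : IsSimpleModule k V := (isSimpleModule_iff k V).2 (e.isSimpleOrder_iff.1 ‹_›)
  exact isSimpleModule_iff_finrank_eq_one.1 this

end Schur

section CommonEigenspace

variable {k G H V W : Type*} [Field k] [AddCommGroup V] [Module k V] [AddCommGroup W] [Module k W]

/-- The space of vectors on which every `g : G` acts by the scalar `c g`: the weight space of `σ`
of weight `c`, where `c` is an arbitrary function, not required to be multiplicative. -/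
def commonEigenspace [Monoid G] (σ : Representation k G V) (c : G → k) : Submodule k V :=
  ⨅ g, End.eigenspace (σ g) (c g)

lemma mem_commonEigenspace [Monoid G] {σ : Representation k G V} {c : G → k} {v : V} :
    v ∈ commonEigenspace σ c ↔ ∀ g, σ g v = c g • v := by
  simp only [commonEigenspace, Submodule.mem_iInf, End.mem_eigenspace_iff]

lemma exists_smul_eq_apply_of_isIrreducible_of_commute [IsAlgClosed k] [FiniteDimensional k V]
    [Monoid G] (σ : Representation k G V) [IsIrreducible σ]
    (hcomm : ∀ x y, Commute (σ x) (σ y)) (g : G) : ∃ c : k, ∀ v, σ g v = c • v := by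
  let φ : IntertwiningMap σ σ := ⟨σ g, fun x => hcomm g x⟩
  obtain ⟨c, hc⟩ :=
    (IsIrreducible.algebraMap_intertwiningMap_bijective_of_isAlgClosed (ρ := σ)).2 φ
  exact ⟨c, fun v => congrArg (fun ψ : IntertwiningMap σ σ => ψ v) hc.symm⟩

lemma exists_commonEigenspace_ne_bot [IsAlgClosed k] [FiniteDimensional k V] [Nontrivial V]
    [Monoid G] (σ : Representation k G V) (hcomm : ∀ x y, Commute (σ x) (σ y)) :
    ∃ c, commonEigenspace σ c ≠ ⊥ := by
  have := isAtomic_subrepresentation (σ := σ)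
  have htop : (⊤ : Subrepresentation σ) ≠ ⊥ := fun h =>
    top_ne_bot (congrArg Subrepresentation.toSubmodule h)
  obtain ⟨U, hU, -⟩ := (eq_bot_or_exists_atom_le (⊤ : Subrepresentation σ)).resolve_left htop
  have := isIrreducible_toRepresentation_of_isAtom hU
  choose c hc using exists_smul_eq_apply_of_isIrreducible_of_commute U.toRepresentation
    fun x y => LinearMap.ext fun u => Subtype.ext (LinearMap.congr_fun (hcomm x y) u)
  have hU0 : U.toSubmodule ≠ ⊥ := fun h => hU.1 (Subrepresentation.toSubmodule_injective h)
  obtain ⟨u, huU, hu0⟩ := U.toSubmodule.ne_bot_iff.1 hU0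
  refine ⟨c, (Submodule.ne_bot_iff _).2 ⟨u, mem_commonEigenspace.2 fun g => ?_, hu0⟩⟩
  exact congrArg Subtype.val (hc g ⟨u, huU⟩)

lemma finrank_intertwiningMap_le_finrank_commonEigenspace [FiniteDimensional k V] [Monoid G]
    [Monoid H] (ι : H →* G) (τ : Representation k G W) [IsIrreducible τ]
    (σ : Representation k G V) {c : H → k} (hc : commonEigenspace (τ.comp ι) c ≠ ⊥) :
    finrank k (IntertwiningMap τ σ) ≤ finrank k (commonEigenspace (σ.comp ι) c) := by
  obtain ⟨w, hw, hw0⟩ := (Submodule.ne_bot_iff _).1 hc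
  have hmem (φ : IntertwiningMap τ σ) : φ w ∈ commonEigenspace (σ.comp ι) c :=
    mem_commonEigenspace.2 fun h => by
      have hτ : τ (ι h) w = c h • w := mem_commonEigenspace.1 hw h
      rw [MonoidHom.comp_apply, ← φ.isIntertwining, hτ, map_smul]
  let eval : IntertwiningMap τ σ →ₗ[k] commonEigenspace (σ.comp ι) c :=
    { toFun := fun φ => ⟨φ w, hmem φ⟩
      map_add' := fun _ _ => rfl
      map_smul' := fun _ _ => rfl }
  refine LinearMap.finrank_le_finrank_of_injective (f := eval) ?_
  refine (injective_iff_map_eq_zero eval).2 fun φ hφ => ?_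
  have hφw : φ w = φ 0 := (congrArg Subtype.val hφ).trans (map_zero φ).symm
  exact (IsIrreducible.injective_or_eq_zero φ).resolve_left fun hinj => hw0 (hinj hφw)

lemma surjective_of_mem_commonEigenspace_linHom [Group G] (ρ : Representation k G V)
    [IsIrreducible ρ] {c : G → k} {f : End k V} (hf : f ∈ commonEigenspace (linHom ρ ρ) c)
    (hf0 : f ≠ 0) : Function.Surjective f := by
  have hsemi (g : G) (v : V) : ρ g (f v) = c g • f (ρ g v) := by
    simpa [linHom_apply] using LinearMap.congr_fun (mem_commonEigenspace.1 hf g) (ρ g v)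
  let X : Subrepresentation ρ := ⟨LinearMap.range f, by
    rintro g _ ⟨v, rfl⟩
    exact hsemi g v ▸ Submodule.smul_mem _ _ ⟨_, rfl⟩⟩
  have hX : X ≠ ⊥ := fun h =>
    hf0 (LinearMap.range_eq_bot.1 (congrArg Subrepresentation.toSubmodule h))
  have hX_top : X = ⊤ := (eq_bot_or_eq_top X).resolve_left hX
  exact LinearMap.range_eq_top.1 (congrArg Subrepresentation.toSubmodule hX_top)

lemma finrank_commonEigenspace_linHom_le_one [IsAlgClosed k] [FiniteDimensional k V] [Group G]
    (ρ : Representation k G V) [IsIrreducible ρ] (c : G → k) :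
    finrank k (commonEigenspace (linHom ρ ρ) c) ≤ 1 :=
  finrank_le_one_of_forall_ne_zero_injective fun _ hf hf0 =>
    LinearMap.injective_iff_surjective.2 (surjective_of_mem_commonEigenspace_linHom ρ hf hf0)

lemma nontrivial_of_isIrreducible [Monoid G] (τ : Representation k G W) [IsIrreducible τ] :
    Nontrivial W :=
  IsSimpleModule.nontrivial (MonoidAlgebra k G) τ.asModule

lemma finrank_intertwiningMap_linHom_le_one [IsAlgClosed k] [FiniteDimensional k V]
    [FiniteDimensional k W] [Group G] {L : Subgroup G} (ρ : Representation k G V)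
    [IsIrreducible (ρ.comp L.subtype)] (τ : Representation k G W) [IsIrreducible τ]
    (hcomm : ∀ x ∈ L, ∀ y ∈ L, Commute (τ x) (τ y)) :
    finrank k (IntertwiningMap τ (linHom ρ ρ)) ≤ 1 := by
  have := nontrivial_of_isIrreducible τ
  obtain ⟨c, hc⟩ := exists_commonEigenspace_ne_bot (τ.comp L.subtype)
    fun x y => hcomm x x.2 y y.2
  exact (finrank_intertwiningMap_le_finrank_commonEigenspace L.subtype τ (linHom ρ ρ) hc).trans
    (finrank_commonEigenspace_linHom_le_one (ρ.comp L.subtype) c)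

end CommonEigenspace

section Restriction

variable {k G V : Type*} [Field k] [AddCommGroup V] [Module k V]

lemma exists_isIrreducible_subrepresentation_of_not_invariants_le [Group G]
    (σ : Representation k G V) [IsSemisimpleRepresentation σ] {L : Subgroup G} [L.Normal]
    (h : ¬ invariants (σ.comp L.subtype) ≤ σ.invariants) :
    ∃ U : Subrepresentation σ, IsIrreducible U.toRepresentation ∧
      L ≤ U.toRepresentation.ker ∧ U.toRepresentation.ker ≠ ⊤ := by
  let X : Subrepresentation σ := ⟨invariants (σ.comp L.subtype), le_comap_invariants σ L⟩
  let Y : Subrepresentation σ := ⟨σ.invariants, fun g v hv => (hv g).symm ▸ hv⟩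
  obtain ⟨U, hU, hUX, hUY⟩ := exists_isAtom_le_of_not_le (X := X) (Y := Y) h
  refine ⟨U, isIrreducible_toRepresentation_of_isAtom hU, fun x hx => ?_, fun hker => ?_⟩
  · exact LinearMap.ext fun u => Subtype.ext (hUX u.2 ⟨x, hx⟩)
  · refine hUY fun u hu g => ?_
    have hg : U.toRepresentation g = 1 := MonoidHom.mem_ker.1 (hker ▸ Subgroup.mem_top g)
    exact congrArg Subtype.val (LinearMap.congr_fun hg ⟨u, hu⟩)

lemma finrank_intertwiningMap_toRepresentation_ne_zero [FiniteDimensional k V] [Monoid G]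
    {σ : Representation k G V} (U : Subrepresentation σ) [IsIrreducible U.toRepresentation] :
    finrank k (IntertwiningMap U.toRepresentation σ) ≠ 0 := by
  have := nontrivial_of_isIrreducible U.toRepresentation
  obtain ⟨u, hu⟩ := exists_ne (0 : U.toSubmodule)
  let incl : IntertwiningMap U.toRepresentation σ := ⟨U.toSubmodule.subtype, fun _ => rfl⟩
  have hincl : incl ≠ 0 := fun h =>
    hu (Subtype.ext (congrArg (fun φ : IntertwiningMap U.toRepresentation σ => φ u) h))
  exact (finrank_pos_iff_exists_ne_zero.2 ⟨incl, hincl⟩).ne'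

lemma isIrreducible_comp_subtype_of_forall_ker_eq_top [IsAlgClosed k] [FiniteDimensional k V]
    [Group G] [Finite G] [NeZero (Nat.card G : k)] (ρ : Representation k G V)
    [IsIrreducible ρ] {L : Subgroup G} [L.Normal]
    (h : ∀ U : Subrepresentation (linHom ρ ρ), IsIrreducible U.toRepresentation →
      L ≤ U.toRepresentation.ker → U.toRepresentation.ker = ⊤) :
    IsIrreducible (ρ.comp L.subtype) := by
  have : NeZero (Nat.card L : k) := ⟨fun h0 => NeZero.ne (Nat.card G : k) <| by
    rw [← L.card_mul_index, Nat.cast_mul, h0, zero_mul]⟩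
  have hle : invariants (linHom (ρ.comp L.subtype) (ρ.comp L.subtype)) ≤
      (linHom ρ ρ).invariants := by
    by_contra hnot
    obtain ⟨U, hU, hLU, hker⟩ :=
      exists_isIrreducible_subrepresentation_of_not_invariants_le (linHom ρ ρ) hnot
    exact hker (h U hU hLU)
  have hge : (linHom ρ ρ).invariants ≤
      invariants (linHom (ρ.comp L.subtype) (ρ.comp L.subtype)) := fun f hf x => hf x
  rw [isIrreducible_iff_finrank_invariants_linHom_eq_one, le_antisymm hle hge,
    ← isIrreducible_iff_finrank_invariants_linHom_eq_one]
  infer_instance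

end Restriction

section Character

variable {G : Type} [Group G] {V W : Type*} [AddCommGroup V] [Module ℂ V]
  [FiniteDimensional ℂ V] [AddCommGroup W] [Module ℂ W] [FiniteDimensional ℂ W]

lemma conj_character [Finite G] (ρ : Representation ℂ G V) (g : G) :
    conj (ρ.character g) = ρ.character g⁻¹ := by
  have hpow : ρ g ^ Nat.card G = 1 := by rw [← map_pow, pow_card_eq_one', map_one]
  exact conj_trace_eq_trace_of_pow_eq_one hpow (by rw [← map_mul, inv_mul_cancel, map_one])

lemma charKer_character [Finite G] (ρ : Representation ℂ G V) :
    charKer G ρ.character = (ρ.ker : Set G) := by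
  ext g
  refine ⟨fun hg => ?_, fun hg => ?_⟩
  · have hpow : ρ g ^ Nat.card G = 1 := by rw [← map_pow, pow_card_eq_one', map_one]
    exact eq_one_of_pow_eq_one_of_trace_eq_finrank hpow (hg.trans ρ.char_one)
  · exact congrArg (LinearMap.trace ℂ V) ((MonoidHom.mem_ker.1 hg).trans (map_one ρ).symm)

lemma character_eq_one_iff_ker_eq_top [Finite G] (τ : Representation ℂ G V) [IsIrreducible τ] :
    τ.character = (fun _ => 1) ↔ τ.ker = ⊤ := by
  refine ⟨fun h => ?_, fun h => ?_⟩
  · rw [← SetLike.coe_set_eq, ← charKer_character, h]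
    simp [charKer]
  · have : τ.IsTrivial := ⟨fun g => MonoidHom.mem_ker.1 (h ▸ Subgroup.mem_top g)⟩
    funext g
    rw [character, isTrivial_def, LinearMap.trace_id,
      finrank_eq_one_of_isIrreducible_of_isTrivial τ, Nat.cast_one]

lemma charInner_mul_conj_eq_finrank_intertwiningMap [Fintype G] (ρ : Representation ℂ G V)
    (τ : Representation ℂ G W) :
    charInner G (fun g => ρ.character g * conj (ρ.character g)) τ.character =
      finrank ℂ (IntertwiningMap τ (linHom ρ ρ)) := by
  have := invertibleOfNonzero (NeZero.ne (Nat.card G : ℂ))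
  rw [← card_inv_mul_sum_char_mul_char_eq_finrank, charInner, Nat.card_eq_fintype_card]
  congr 1
  refine Finset.sum_congr rfl fun g _ => ?_
  rw [char_linHom, conj_character, conj_character, mul_comm (ρ.character g)]

lemma isIrrChar_character [Fintype G] {V : Type} [AddCommGroup V] [Module ℂ V]
    [FiniteDimensional ℂ V] (ρ : Representation ℂ G V) [IsIrreducible ρ] :
    IsIrrChar G ρ.character :=
  ⟨FDRep.of ρ, (simple_iff_isIrreducible (FDRep.of ρ)).2 ‹_›, rfl⟩

lemma exists_isIrreducible_character_eq [Fintype G] {χ : G → ℂ} (hχ : IsIrrChar G χ) :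
    ∃ (V : Type) (_ : AddCommGroup V) (_ : Module ℂ V) (_ : FiniteDimensional ℂ V)
      (ρ : Representation ℂ G V), IsIrreducible ρ ∧ ρ.character = χ := by
  obtain ⟨V, hV, rfl⟩ := hχ
  exact ⟨V, inferInstance, inferInstance, inferInstance, V.ρ, (simple_iff_isIrreducible V).1 hV,
    rfl⟩

lemma isIrreducible_comp_subtype_of_forall_not_subset_charKer [Fintype G] {V : Type}
    [AddCommGroup V] [Module ℂ V] [FiniteDimensional ℂ V] (ρ : Representation ℂ G V)
    [IsIrreducible ρ] {L : Subgroup G} [L.Normal]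
    (h : ∀ β : G → ℂ, IsIrrChar G β → β ≠ (fun _ => 1) →
      charInner G (fun g => ρ.character g * conj (ρ.character g)) β ≠ 0 →
      ¬ (L : Set G) ⊆ charKer G β) :
    IsIrreducible (ρ.comp L.subtype) := by
  refine isIrreducible_comp_subtype_of_forall_ker_eq_top ρ fun U _ hLU => ?_
  by_contra hU
  refine h U.toRepresentation.character (isIrrChar_character _)
    (mt (character_eq_one_iff_ker_eq_top _).1 hU) ?_ ?_
  · rw [charInner_mul_conj_eq_finrank_intertwiningMap, Nat.cast_ne_zero]
    exact finrank_intertwiningMap_toRepresentation_ne_zero U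
  · rw [charKer_character]
    exact hLU

lemma charInner_mul_conj_eq_one_of_commute [Fintype G] {L : Subgroup G}
    (ρ : Representation ℂ G V) [IsIrreducible (ρ.comp L.subtype)] (τ : Representation ℂ G W)
    [IsIrreducible τ] (hcomm : ∀ x ∈ L, ∀ y ∈ L, Commute (τ x) (τ y))
    (hne : charInner G (fun g => ρ.character g * conj (ρ.character g)) τ.character ≠ 0) :
    charInner G (fun g => ρ.character g * conj (ρ.character g)) τ.character = 1 := by
  rw [charInner_mul_conj_eq_finrank_intertwiningMap] at hne ⊢
  have hpos := Nat.pos_of_ne_zero (Nat.cast_ne_zero.1 hne)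
  rw [Nat.cast_eq_one]
  exact (finrank_intertwiningMap_linHom_le_one ρ τ hcomm).antisymm hpos

end Character

section Solvable

open scoped commutatorElement

variable {G : Type*} [Group G]

lemma exists_normal_lt_commutator_le [Group.IsSolvable G] {N : Subgroup G} [N.Normal]
    (hN : N ≠ ⊤) : ∃ L : Subgroup G, L.Normal ∧ N < L ∧ ⁅L, L⁆ ≤ N := by
  have hex : ∃ n, derivedSeries G n ≤ N := by
    obtain ⟨n, hn⟩ := Group.IsSolvable.solvable (G := G)
    exact ⟨n, hn ▸ bot_le⟩
  obtain ⟨n, hn, hn'⟩ : ∃ n, derivedSeries G (n + 1) ≤ N ∧ ¬ derivedSeries G n ≤ N := by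
    have hpos : Nat.find hex ≠ 0 := fun h => hN (top_le_iff.1 ((Nat.find_eq_zero hex).1 h))
    obtain ⟨n, hn⟩ := Nat.exists_eq_succ_of_ne_zero hpos
    exact ⟨n, (congrArg _ hn).ge.trans (Nat.find_spec hex), Nat.find_min hex (by lia)⟩
  refine ⟨derivedSeries G n ⊔ N, inferInstance, right_lt_sup.2 hn', ?_⟩
  let π := QuotientGroup.mk' N
  have hπ (K : Subgroup G) : K.map π = ⊥ ↔ K ≤ N := by
    rw [Subgroup.map_eq_bot_iff, QuotientGroup.ker_mk']
  rw [← hπ, Subgroup.map_commutator, Subgroup.map_sup, (hπ N).2 le_rfl, sup_bot_eq,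
    ← Subgroup.map_commutator, hπ]
  exact hn

lemma commute_of_commutator_le_ker {M : Type*} [Monoid M] {f : G →* M} {L : Subgroup G}
    (hL : ⁅L, L⁆ ≤ f.ker) {x y : G} (hx : x ∈ L) (hy : y ∈ L) : Commute (f x) (f y) := by
  have hxy : f ⁅x, y⁆ = 1 := hL (Subgroup.commutator_mem_commutator hx hy)
  calc f x * f y = f (⁅x, y⁆ * (y * x)) := by rw [← map_mul]; congr 1; group
    _ = f y * f x := by rw [map_mul, hxy, one_mul, map_mul]

end Solvable

/-- Theorem C: if `Ker(α j)` is maximal among the kernels of the non-principal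
irreducible constituents of `χ ⬝ conj χ`, then `α j` has multiplicity 1. -/
theorem multiplicity_one_of_maximal_kernel (G : Type) [Group G] [Fintype G]
    (hsolv : IsSolvable G) (χ : G → ℂ) (hχ : IsIrrChar G χ) (hdeg : 1 < (χ 1).re)
    (n : ℕ) (α : Fin n → (G → ℂ)) (hinj : Function.Injective α)
    (hirr : ∀ i, IsIrrChar G (α i)) (hnp : ∀ i, α i ≠ fun _ => 1)
    (hconst : ∀ i, charInner G (fun g => χ g * (starRingEnd ℂ) (χ g)) (α i) ≠ 0)
    (hall : ∀ β : G → ℂ, IsIrrChar G β → β ≠ (fun _ => 1) →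
      charInner G (fun g => χ g * (starRingEnd ℂ) (χ g)) β ≠ 0 → ∃ i, β = α i)
    (j : Fin n)
    (hmax : ∀ i, charKer G (α j) ⊆ charKer G (α i) → charKer G (α i) = charKer G (α j)) :
    charInner G (fun g => χ g * (starRingEnd ℂ) (χ g)) (α j) = 1 := by
  have : Group.IsSolvable G := hsolv
  obtain ⟨V, _, _, _, ρ, _, rfl⟩ := exists_isIrreducible_character_eq hχ
  obtain ⟨W, _, _, _, τ, _, hτ⟩ := exists_isIrreducible_character_eq (hirr j)
  have hker : charKer G (α j) = (τ.ker : Set G) := hτ ▸ charKer_character τ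
  have hker_ne_top : τ.ker ≠ ⊤ :=
    (character_eq_one_iff_ker_eq_top τ).not.1 (hτ ▸ hnp j)
  obtain ⟨L, _, hτL, hL⟩ := exists_normal_lt_commutator_le hker_ne_top
  have hρL : IsIrreducible (ρ.comp L.subtype) := by
    refine isIrreducible_comp_subtype_of_forall_not_subset_charKer ρ fun β hβ hβ1 hβρ hLβ => ?_
    obtain ⟨i, rfl⟩ := hall β hβ hβ1 hβρ
    have hmax_i : charKer G (α i) = τ.ker :=
      (hmax i (hker.subset.trans (subset_trans hτL.le hLβ))).trans hker
    exact hτL.not_ge (hLβ.trans hmax_i.subset)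
  rw [← hτ]
  exact charInner_mul_conj_eq_one_of_commute (L := L) ρ τ
    (fun _ hx _ hy => commute_of_commutator_le_ker hL hx hy) (hτ ▸ hconst j)
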